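/- arXiv:2405.20807 — 2 statements merged into one kernel-verified Lean document; each statement's English description precedes it below -/
import Mathlib

section
/- Let β : (−1,1) → ℝ be a continuous, monotone increasing function with β(0) = 0, lim_{r→−1⁺} β(r) = −∞ and lim_{r→1⁻} β(r) = +∞, and let m₀ ∈ (−1,1). Then there exist positive constants c₃ and c₄ such that β(r)·(r − m₀) ≥ c₃·|β(r)| − c₄ for every r ∈ (−1,1). -/
open Set Filter

/-- Inequality (4.16): if `β` is continuous and monotone increasing on `(-1,1)` with
`β 0 = 0`, `β(r) → -∞` as `r → -1⁺`, `β(r) → +∞` as `r → 1⁻`, and `m₀ ∈ (-1,1)`, then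
there are positive constants `c₃, c₄` with `β(r)(r - m₀) ≥ c₃ |β(r)| - c₄` on `(-1,1)`. -/
theorem mean_chemical_potential_bound
    (β : ℝ → ℝ) (m₀ : ℝ)
    (hβ_cont : ContinuousOn β (Ioo (-1 : ℝ) 1))
    (hβ_mono : MonotoneOn β (Ioo (-1 : ℝ) 1))
    (hβ_zero : β 0 = 0)
    (hβ_bot : Tendsto β (nhdsWithin (-1 : ℝ) (Ioo (-1 : ℝ) 1)) atBot)
    (hβ_top : Tendsto β (nhdsWithin (1 : ℝ) (Ioo (-1 : ℝ) 1)) atTop)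
    (hm₀ : m₀ ∈ Ioo (-1 : ℝ) 1) :
    ∃ c₃ c₄ : ℝ, 0 < c₃ ∧ 0 < c₄ ∧
      ∀ r ∈ Ioo (-1 : ℝ) 1, β r * (r - m₀) ≥ c₃ * |β r| - c₄ := by
  obtain ⟨h1, h2⟩ := hm₀
  have hm : |m₀| < 1 := abs_lt.2 ⟨h1, h2⟩
  have hm0 : 0 ≤ |m₀| := abs_nonneg _
  have hle := le_abs_self m₀
  have hge := neg_abs_le m₀
  obtain ⟨a, ha⟩ : ∃ a, a = (1 + |m₀|) / 2 := ⟨_, rfl⟩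
  have hA : a ∈ Ioo (-1 : ℝ) 1 := ⟨by linarith, by linarith⟩
  have hA' : -a ∈ Ioo (-1 : ℝ) 1 := ⟨by linarith, by linarith⟩
  have h0 : (0 : ℝ) ∈ Ioo (-1 : ℝ) 1 := ⟨by norm_num, by norm_num⟩
  have hpa : 0 ≤ β a := hβ_zero ▸ hβ_mono h0 hA (by linarith)
  have hna : β (-a) ≤ 0 := hβ_zero ▸ hβ_mono hA' h0 (by linarith)
  refine ⟨(1 - |m₀|) / 2, 3 * (β a - β (-a)) + 1, by linarith, by linarith, ?_⟩
  intro r hr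
  rcases le_total a r with h | h
  · have hb : 0 ≤ β r := hpa.trans (hβ_mono hA hr h)
    rw [abs_of_nonneg hb]
    have : 0 ≤ β r * (r - m₀ - (1 - |m₀|) / 2) := mul_nonneg hb (by linarith)
    linarith
  rcases le_total r (-a) with h' | h'
  · have hb : β r ≤ 0 := (hβ_mono hr hA' h').trans hna
    rw [abs_of_nonpos hb]
    have : 0 ≤ (-β r) * (m₀ - r - (1 - |m₀|) / 2) :=
      mul_nonneg (by linarith) (by linarith)
    linarith
  · have u := hβ_mono hr hA h
    have l := hβ_mono hA' hr h'
    have hM : |β r| ≤ β a - β (-a) := abs_le.2 ⟨by linarith, by linarith⟩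
    have hd : |r - m₀| ≤ 2 := abs_le.2 ⟨by linarith [hr.1], by linarith [hr.2]⟩
    have e1 : -(|β r| * |r - m₀|) ≤ β r * (r - m₀) := by
      rw [← abs_mul]; exact neg_abs_le _
    have e2 : |β r| * |r - m₀| ≤ |β r| * 2 := mul_le_mul_of_nonneg_left hd (abs_nonneg _)
    have e3 : (1 - |m₀|) / 2 * |β r| ≤ 1 * |β r| :=
      mul_le_mul_of_nonneg_right (by linarith) (abs_nonneg _)
    linarith
end

section
/- Let θ ∈ (0,1/2], c > 0 and E_∞ ∈ ℝ. Let E : [0,∞) → ℝ and g : [0,∞) → [0,∞) be continuous functions such that E is differentiable on (0,∞) with E'(t) = −g(t)² for all t > 0, E(t) ≥ E_∞ for all t ≥ 0, and g(t) ≥ c·(E(t) − E_∞)^{1−θ} for all t > 0. Then g is integrable on (0,∞) and ∫₀^∞ g(t) dt ≤ (E(0) − E_∞)^θ/(c·θ). -/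
open Set MeasureTheory

/-- The abstract Łojasiewicz–Simon integrability argument: if `E' = -g²` on `(0,∞)`,
`E ≥ E_∞`, and `g ≥ c (E - E_∞)^(1-θ)` with `θ ∈ (0, 1/2]` and `c > 0`, then `g` is
integrable on `(0,∞)` and `∫₀^∞ g ≤ (E 0 - E_∞)^θ / (c θ)`. -/
theorem lojasiewicz_simon_integrability
    (θ c E_inf : ℝ) (E g : ℝ → ℝ)
    (hθ : θ ∈ Ioc (0 : ℝ) (1 / 2)) (hc : 0 < c)
    (hE_cont : ContinuousOn E (Ici (0 : ℝ)))
    (hg_cont : ContinuousOn g (Ici (0 : ℝ)))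
    (hg_nonneg : ∀ t : ℝ, 0 ≤ t → 0 ≤ g t)
    (hE_deriv : ∀ t : ℝ, 0 < t → HasDerivAt E (-(g t) ^ 2) t)
    (hE_lower : ∀ t : ℝ, 0 ≤ t → E_inf ≤ E t)
    (hLS : ∀ t : ℝ, 0 < t → c * (E t - E_inf) ^ (1 - θ) ≤ g t) :
    IntegrableOn g (Ioi (0 : ℝ)) volume ∧
      ∫ t in Ioi (0 : ℝ), g t ≤ (E 0 - E_inf) ^ θ / (c * θ) := by
  obtain ⟨hθ0, hθ1⟩ := hθ
  have hanti : AntitoneOn E (Ici (0 : ℝ)) := by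
    apply antitoneOn_of_deriv_nonpos (convex_Ici 0) hE_cont
    · intro x hx
      rw [interior_Ici] at hx
      exact (hE_deriv x hx).differentiableAt.differentiableWithinAt
    · intro x hx
      rw [interior_Ici] at hx
      rw [(hE_deriv x hx).deriv]
      have := sq_nonneg (g x)
      linarith
  have hint : ∀ b : ℝ, IntegrableOn g (Icc 0 b) volume := fun b =>
    (hg_cont.mono Icc_subset_Ici_self).integrableOn_Icc
  have hE0 : 0 ≤ (E 0 - E_inf) ^ θ / (c * θ) := by
    have : 0 ≤ E 0 - E_inf := sub_nonneg.2 (hE_lower 0 le_rfl)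
    positivity
  have key : ∀ b : ℝ, 0 ≤ b → ∫ t in (0 : ℝ)..b, g t ≤ (E 0 - E_inf) ^ θ / (c * θ) := by
    intro b hb
    have h := intervalIntegral.integral_le_sub_of_hasDeriv_right_of_le
      (g := fun t => -((E t - E_inf) ^ θ / (c * θ)))
      (g' := fun t => (g t) ^ 2 * (E t - E_inf) ^ (θ - 1) / c) (φ := g) hb ?_ ?_ (hint b) ?_
    · have h2 : 0 ≤ (E b - E_inf) ^ θ / (c * θ) := by
        have : 0 ≤ E b - E_inf := sub_nonneg.2 (hE_lower b hb)
        positivity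
      linarith
    · have h1 : ContinuousOn (fun t => E t - E_inf) (Icc 0 b) :=
        (hE_cont.mono Icc_subset_Ici_self).sub continuousOn_const
      exact ((h1.rpow_const (fun x _ => Or.inr hθ0.le)).div_const _).neg
    · intro x hx
      rcases (hE_lower x hx.1.le).eq_or_lt with h0 | h0
      · have hz : ∀ y ∈ Ioi x, -((E y - E_inf) ^ θ / (c * θ)) = 0 := by
          intro y hy
          have hy0 : 0 ≤ y := hx.1.le.trans (le_of_lt hy)
          have h1 := hanti (mem_Ici.2 hx.1.le) (mem_Ici.2 hy0) (le_of_lt hy)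
          have h2 := hE_lower y hy0
          have h3 : E y - E_inf = 0 := by linarith
          rw [h3, Real.zero_rpow hθ0.ne']
          simp
        have h3 : E x - E_inf = 0 := by linarith
        have h4 : (g x) ^ 2 * (E x - E_inf) ^ (θ - 1) / c = 0 := by
          rw [h3, Real.zero_rpow (by linarith)]
          simp
        simp only [h4]
        refine (hasDerivWithinAt_const x (Ioi x) (0 : ℝ)).congr hz ?_
        rw [h3, Real.zero_rpow hθ0.ne']
        simp
      · have hpos : 0 < E x - E_inf := sub_pos.2 h0
        have h1 := ((((hE_deriv x hx.1).sub_const E_inf).rpow_const (p := θ)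
          (Or.inl hpos.ne')).div_const (c * θ)).neg
        refine HasDerivAt.hasDerivWithinAt ?_
        convert! h1 using 1
        field_simp
    · intro x hx
      have hgx := hg_nonneg x hx.1.le
      rcases (hE_lower x hx.1.le).eq_or_lt with h0 | h0
      · have hmin : IsLocalMin E x := by
          filter_upwards [Ioi_mem_nhds hx.1] with y hy
          rw [← h0]
          exact hE_lower y (le_of_lt hy)
        have h1 := hmin.hasDerivAt_eq_zero (hE_deriv x hx.1)
        have h2 : g x = 0 := by
          have : (g x) ^ 2 = 0 := by linarith
          exact pow_eq_zero_iff (two_ne_zero) |>.1 this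
        simp [h2]
      · have hpos : 0 < E x - E_inf := sub_pos.2 h0
        have h1 := hLS x hx.1
        have hP : 0 < (E x - E_inf) ^ (θ - 1) := Real.rpow_pos_of_pos hpos _
        have h2 : (E x - E_inf) ^ (1 - θ) * (E x - E_inf) ^ (θ - 1) = 1 := by
          rw [← Real.rpow_add hpos]
          simp
        have h3 : c ≤ g x * (E x - E_inf) ^ (θ - 1) := by
          have := mul_le_mul_of_nonneg_right h1 hP.le
          rwa [mul_assoc, h2, mul_one] at this
        rw [le_div_iff₀ hc]
        nlinarith [mul_le_mul_of_nonneg_left h3 hgx]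
  have hgi : IntegrableOn g (Ioi (0 : ℝ)) volume := by
    refine integrableOn_Ioi_of_intervalIntegral_norm_bounded (b := fun x : ℝ => x)
      (l := Filter.atTop) ((E 0 - E_inf) ^ θ / (c * θ)) 0
      (fun b => (hint b).mono_set Ioc_subset_Icc_self) Filter.tendsto_id ?_
    filter_upwards [Filter.eventually_ge_atTop (0 : ℝ)] with b hb
    refine le_trans (le_of_eq ?_) (key b hb)
    apply intervalIntegral.integral_congr
    intro x hx
    rw [uIcc_of_le hb] at hx
    exact Real.norm_of_nonneg (hg_nonneg x hx.1)
  refine ⟨hgi, ?_⟩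
  refine le_of_tendsto (intervalIntegral_tendsto_integral_Ioi 0 hgi
    (Filter.tendsto_id (α := ℝ) (x := Filter.atTop))) ?_
  filter_upwards [Filter.eventually_ge_atTop (0 : ℝ)] with b hb
  exact key b hb
end
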